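/- arXiv:2604.27592 — 2 statements merged into one kernel-verified Lean document; each statement's English description precedes it below -/
import Mathlib

section
/- Let F be an algebraically closed field of characteristic 0, k ≥ 2 an integer, and J ∈ M_n(F) a matrix in Jordan canonical form with at most one Jordan block corresponding to the eigenvalue 0 (i.e., nullity of J is at most 1). Then the map (X₁, X₂) ↦ X₁^k + J·X₂^k is surjective on M_n(F). -/
/-- The Jordan block of size `m` with eigenvalue `lam`. -/
def jordanBlock {F : Type*} [Zero F] [One F] (lam : F) (m : ℕ) :
    Matrix (Fin m) (Fin m) F :=
  Matrix.of fun i j => if i = j then lam else if (i : ℕ) + 1 = (j : ℕ) then 1 else 0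

/-!
Choose an idempotent `P` with the same range as `J` and a scalar `c` outside the spectrum of `C`,
and split `C = (c P + (1 - P) C) + P (C - c)`. Since `C - c` is invertible, the second summand has
the range of `J`, so it is `J U` for an invertible `U`, and invertible endomorphisms have `k`-th
roots (by Newton iteration in the commutative algebra they generate). As `1 - P` has rank at most
one, the direction of its range can be chosen so that either `(1 - P) C = 0`, making the first
summand a multiple of `P`, or the first summand is invertible; it is a `k`-th power either way.
-/

open Module

section Roots

open Polynomial

lemma exists_pow_eq_of_isNilpotent_pow_sub {R : Type*} [CommRing R] {k : ℕ}
    (hk : IsUnit (k : R)) {a x : R} (ha : IsUnit a) (h : IsNilpotent (x ^ k - a)) :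
    ∃ y, y ^ k = a := by
  have hxk : IsUnit (x ^ k) := by
    simpa using h.isUnit_add_left_of_commute ha (.all _ _)
  have hx : IsUnit (x ^ (k - 1)) := by
    cases k with
    | zero => simp
    | succ k => exact (isUnit_pow_succ_iff.1 hxk).pow k
  have hderiv : IsUnit (aeval x (derivative (X ^ k - C a))) := by
    simpa [derivative_X_pow] using hk.mul hx
  obtain ⟨y, ⟨-, hy⟩, -⟩ := existsUnique_nilpotent_sub_and_aeval_eq_zero
    (P := X ^ k - C a) (x := x) (by simpa using h) hderiv
  exact ⟨y, sub_eq_zero.1 (by simpa using hy)⟩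

lemma exists_dvd_pow_sub_X_pow {F : Type*} [Field F] [IsAlgClosed F] {k : ℕ} (hk : k ≠ 0)
    {f : F[X]} (hf : f ≠ 0) : ∃ (p : F[X]) (m : ℕ), f ∣ (p ^ k - X) ^ m := by
  classical
  choose ρ hρ using fun z : F => IsAlgClosed.exists_pow_nat_eq z (Nat.pos_of_ne_zero hk)
  let p : F[X] := Lagrange.interpolate f.roots.toFinset id ρ
  have hp : ∀ z ∈ f.roots, X - C z ∣ p ^ k - X := by
    intro z hz
    have hpz : p.eval z = ρ z := Lagrange.eval_interpolate_at_node (v := id) ρ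
      Function.injective_id.injOn (Multiset.mem_toFinset.2 hz)
    simp [dvd_iff_isRoot, hpz, hρ]
  refine ⟨p, f.roots.card, ?_⟩
  calc
    f ∣ (f.roots.map (X - C ·)).prod :=
        (dvd_C_mul (leadingCoeff_ne_zero.2 hf)).1 (IsAlgClosed.splits f).eq_prod_roots.dvd
    _ ∣ (f.roots.map fun _ => p ^ k - X).prod := Multiset.prod_dvd_prod_of_dvd _ _ hp
    _ = (p ^ k - X) ^ f.roots.card := by rw [Multiset.map_const', Multiset.prod_replicate]

open scoped IsMulCommutative in
theorem exists_pow_eq_of_isIntegral_of_isUnit {F A : Type*} [Field F] [IsAlgClosed F] [Ring A]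
    [Algebra F A] {k : ℕ} (hk : (k : F) ≠ 0) {a : A} (hint : IsIntegral F a) (ha : IsUnit a) :
    ∃ x, x ^ k = a := by
  let S := Algebra.adjoin F {a}
  let s : S := ⟨a, Algebra.self_mem_adjoin_singleton F a⟩
  have : Module.Finite F S := .of_fg hint.fg_adjoin_singleton
  have : IsArtinianRing S := .of_finite F S
  have hs : IsUnit s := IsArtinianRing.isUnit_of_mem_nonZeroDivisors <|
    mem_nonZeroDivisors_of_injective (f := S.val) Subtype.val_injective ha.mem_nonZeroDivisors
  have hminpoly : aeval s (minpoly F a) = 0 :=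
    minpoly.algHom_eq S.val Subtype.val_injective s ▸ minpoly.aeval F s
  obtain ⟨p, m, q, hq⟩ := exists_dvd_pow_sub_X_pow (k := k) (by rintro rfl; simp at hk)
    (minpoly.ne_zero hint)
  have hnil : IsNilpotent (aeval s p ^ k - s) :=
    ⟨m, by simpa [hminpoly] using congrArg (aeval s) hq⟩
  have hkS : IsUnit (k : S) := by simpa using (IsUnit.mk0 _ hk).map (algebraMap F S)
  obtain ⟨y, hy⟩ := exists_pow_eq_of_isNilpotent_pow_sub hkS hs hnil
  exact ⟨y, congrArg Subtype.val hy⟩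

end Roots

section Endomorphisms

variable {F V : Type*} [Field F] [AddCommGroup V] [Module F V]

lemma exists_linearEquiv_comp_eq_of_range_eq [FiniteDimensional F V] {W : Type*} [AddCommGroup W]
    [Module F W] {f g : V →ₗ[F] W} (h : f.range = g.range) : ∃ u : V ≃ₗ[F] V, f = g ∘ₗ u := by
  obtain ⟨M, hM⟩ := f.ker.exists_isCompl
  obtain ⟨N, hN⟩ := g.ker.exists_isCompl
  have hker : finrank F f.ker = finrank F g.ker := by
    have hf := f.finrank_range_add_finrank_ker
    have hg := g.finrank_range_add_finrank_ker
    rw [h] at hf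
    lia
  let eker : f.ker ≃ₗ[F] g.ker := LinearEquiv.ofFinrankEq _ _ hker
  let ecompl : M ≃ₗ[F] N := f.kerComplementEquivRange hM.symm ≪≫ₗ LinearEquiv.ofEq _ _ h ≪≫ₗ
    (g.kerComplementEquivRange hN.symm).symm
  have hecompl (y : M) : g (ecompl y) = f y :=
    congrArg Subtype.val
      ((g.kerComplementEquivRange hN.symm).apply_symm_apply ⟨f y, h ▸ ⟨y, rfl⟩⟩)
  refine ⟨(f.ker.prodEquivOfIsCompl M hM).symm ≪≫ₗ eker.prodCongr ecompl ≪≫ₗ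
    g.ker.prodEquivOfIsCompl N hN, ?_⟩
  ext v
  obtain ⟨⟨x, y⟩, rfl⟩ := (f.ker.prodEquivOfIsCompl M hM).surjective v
  simp [hecompl]

lemma exists_ne_zero_isUnit_sub_smul_one [Infinite F] [FiniteDimensional F V] (T : End F V) :
    ∃ c : F, c ≠ 0 ∧ IsUnit (T - c • 1) := by
  obtain ⟨c, hc⟩ := ((End.finite_spectrum T).insert 0).exists_notMem
  rw [Set.mem_insert_iff, not_or, spectrum.notMem_iff] at hc
  exact ⟨c, hc.1, by simpa [Algebra.algebraMap_eq_smul_one] using hc.2.neg⟩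

lemma exists_apply_eq_one_and_eq_zero_or_apply_ne_zero {φ : Dual F V} (hφ : φ ≠ 0)
    (ψ : Dual F V) : ∃ e, φ e = 1 ∧ (ψ = 0 ∨ ψ e ≠ 0) := by
  obtain ⟨v, hv⟩ : ∃ v, φ v = 1 := LinearMap.surjective hφ 1
  by_cases hψ : ψ = 0 ∨ ψ v ≠ 0
  · exact ⟨v, hv, hψ⟩
  push Not at hψ
  obtain ⟨w, hw⟩ : ∃ w, ψ w = 1 := LinearMap.surjective hψ.1 1
  by_cases hφw : φ w = 0
  · exact ⟨v + w, by simp [hv, hφw], by simp [hψ, hw]⟩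
  · exact ⟨(φ w)⁻¹ • w, by simp [hφw], by simp [hφw, hw]⟩

lemma range_one_sub_smulRight {φ : Dual F V} {e : V} (he : φ e = 1) :
    (1 - φ.smulRight e : End F V).range = φ.ker := by
  ext x
  constructor
  · rintro ⟨y, rfl⟩
    simp [he]
  · intro hx
    exact ⟨x, by simp [LinearMap.mem_ker.1 hx]⟩

lemma isUnit_smul_one_sub_smulRight_add_smulRight [FiniteDimensional F V] {φ ψ : Dual F V}
    {e : V} {c : F} (hφ : φ e = 1) (hψ : ψ e ≠ 0) (hc : c ≠ 0) :
    IsUnit (c • (1 - φ.smulRight e) + ψ.smulRight e : End F V) := by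
  rw [LinearMap.isUnit_iff_ker_eq_bot, LinearMap.ker_eq_bot']
  intro x hx
  have hx' : c • (x - φ x • e) + ψ x • e = 0 := by simpa using hx
  have hψx : ψ x = 0 := by simpa [hφ] using congrArg φ hx'
  have hxe : x = φ x • e := by simpa [hψx, hc, sub_eq_zero] using hx'
  have hφx : φ x = 0 := by
    rw [hxe, map_smul, smul_eq_mul] at hψx
    exact (mul_eq_zero.1 hψx).resolve_right hψ
  rw [hxe, hφx, zero_smul]

lemma exists_isIdempotentElem_range_eq [FiniteDimensional F V] {W : Submodule F V}
    (hW : finrank F (V ⧸ W) ≤ 1) (T : End F V) :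
    ∃ P : End F V, IsIdempotentElem P ∧ P.range = W ∧
      ((1 - P) * T = 0 ∨ ∀ c : F, c ≠ 0 → IsUnit (c • P + (1 - P) * T)) := by
  rcases eq_or_ne W ⊤ with rfl | hne
  · exact ⟨1, .one, LinearMap.range_id, .inl (by simp)⟩
  obtain ⟨φ, hφ, hWφ⟩ := W.exists_le_ker_of_lt_top hne.lt_top
  obtain rfl : W = φ.ker := Submodule.eq_of_le_of_finrank_le hWφ <| by
    have := Dual.finrank_ker_add_one_of_ne_zero hφ
    have := W.finrank_quotient_add_finrank
    lia
  obtain ⟨e, he, hTe⟩ := exists_apply_eq_one_and_eq_zero_or_apply_ne_zero hφ (φ ∘ₗ T)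
  have hidem : IsIdempotentElem (φ.smulRight e : End F V) := by
    ext x
    simp [he]
  have hmul : (φ.smulRight e : End F V) * T = (φ ∘ₗ T).smulRight e := rfl
  refine ⟨1 - φ.smulRight e, hidem.one_sub, range_one_sub_smulRight he, ?_⟩
  rw [sub_sub_cancel, hmul]
  refine hTe.imp (fun hT => ?_) fun hT c hc =>
    isUnit_smul_one_sub_smulRight_add_smulRight he hT hc
  rw [hT]
  exact LinearMap.ext fun _ => zero_smul F e

lemma exists_pow_eq_smul_of_isIdempotentElem [IsAlgClosed F] {A : Type*} [Ring A] [Algebra F A]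
    {k : ℕ} (hk : k ≠ 0) {p : A} (hp : IsIdempotentElem p) (c : F) : ∃ x, x ^ k = c • p := by
  obtain ⟨d, rfl⟩ := IsAlgClosed.exists_pow_nat_eq c (Nat.pos_of_ne_zero hk)
  exact ⟨d • p, by rw [smul_pow, hp.pow_eq hk]⟩

variable [IsAlgClosed F] [FiniteDimensional F V] {k : ℕ}

lemma exists_eq_pow_add_and_range_eq (hk : (k : F) ≠ 0) {W : Submodule F V}
    (hW : finrank F (V ⧸ W) ≤ 1) (T : End F V) :
    ∃ X D : End F V, T = X ^ k + D ∧ D.range = W := by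
  obtain ⟨P, hP, hPW, hPT⟩ := exists_isIdempotentElem_range_eq hW T
  obtain ⟨c, hc, hTc⟩ := exists_ne_zero_isUnit_sub_smul_one T
  obtain ⟨X, hX⟩ : ∃ X, X ^ k = c • P + (1 - P) * T := by
    rcases hPT with hzero | hunit
    · rw [hzero, add_zero]
      exact exists_pow_eq_smul_of_isIdempotentElem (by rintro rfl; simp at hk) hP c
    · exact exists_pow_eq_of_isIntegral_of_isUnit hk (Algebra.IsIntegral.isIntegral _) (hunit c hc)
  refine ⟨X, P * (T - c • 1), ?_, ?_⟩
  · rw [hX, mul_sub, mul_smul_comm, mul_one, sub_mul, one_mul]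
    abel
  · rw [End.mul_eq_comp, LinearMap.range_comp_of_range_eq_top _
      (LinearMap.isUnit_iff_range_eq_top _ |>.1 hTc), hPW]

theorem exists_eq_pow_add_mul_pow (hk : (k : F) ≠ 0) {J : End F V} (hJ : finrank F J.ker ≤ 1)
    (T : End F V) : ∃ X₁ X₂ : End F V, T = X₁ ^ k + J * X₂ ^ k := by
  have hcodim : finrank F (V ⧸ J.range) ≤ 1 := by
    have := J.range.finrank_quotient_add_finrank
    have := J.finrank_range_add_finrank_ker
    lia
  obtain ⟨X₁, D, hT, hD⟩ := exists_eq_pow_add_and_range_eq hk hcodim T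
  obtain ⟨u, rfl⟩ := exists_linearEquiv_comp_eq_of_range_eq hD
  obtain ⟨X₂, hX₂⟩ := exists_pow_eq_of_isIntegral_of_isUnit hk
    (Algebra.IsIntegral.isIntegral (u : End F V)) ((End.isUnit_iff _).2 u.bijective)
  exact ⟨X₁, X₂, by rw [hX₂, hT, End.mul_eq_comp]⟩

end Endomorphisms

section Nullity

open Matrix

variable {F : Type*} [Field F]

lemma finrank_ker_mulVecLin_reindex {m n : Type*} [Fintype m] [Fintype n] (e : m ≃ n)
    (A : Matrix m m F) :
    finrank F (reindex e e A).mulVecLin.ker = finrank F A.mulVecLin.ker := by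
  have hA := A.mulVecLin.finrank_range_add_finrank_ker
  have hB := (reindex e e A).mulVecLin.finrank_range_add_finrank_ker
  have hrank : finrank F (reindex e e A).mulVecLin.range = finrank F A.mulVecLin.range :=
    rank_reindex e e A
  rw [finrank_pi] at hA hB
  have := Fintype.card_congr e
  lia

lemma blockDiagonal'_mulVec_apply {R ι : Type*} [NonUnitalNonAssocSemiring R] [Fintype ι]
    [DecidableEq ι] {m n : ι → Type*} [∀ i, Fintype (n i)] (M : ∀ i, Matrix (m i) (n i) R)
    (x : (Σ i, n i) → R) (i : ι) (a : m i) :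
    (blockDiagonal' M *ᵥ x) ⟨i, a⟩ = (M i *ᵥ fun b => x ⟨i, b⟩) a := by
  rw [mulVec, dotProduct, Fintype.sum_sigma, Fintype.sum_eq_single i]
  · simp [mulVec, dotProduct, blockDiagonal'_apply]
  · intro j hj
    simp [blockDiagonal'_apply, hj.symm]

lemma finrank_ker_mulVecLin_blockDiagonal' {ι : Type*} [Fintype ι] [DecidableEq ι]
    {m n : ι → Type*} [∀ i, Fintype (n i)] (M : ∀ i, Matrix (m i) (n i) F) :
    finrank F (blockDiagonal' M).mulVecLin.ker = ∑ i, finrank F (M i).mulVecLin.ker := by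
  rw [← finrank_pi_fintype]
  refine LinearEquiv.finrank_eq
    { toFun := fun x i => ⟨fun a => x.1 ⟨i, a⟩, ?_⟩
      invFun := fun y => ⟨fun p => (y p.1).1 p.2, ?_⟩
      map_add' := fun _ _ => rfl
      map_smul' := fun _ _ => rfl
      left_inv := fun _ => rfl
      right_inv := fun _ => rfl }
  · ext a
    exact (blockDiagonal'_mulVec_apply M x.1 i a).symm.trans (congrFun x.2 _)
  · ext ⟨i, a⟩
    exact (blockDiagonal'_mulVec_apply M _ i a).trans (congrFun (y i).2 a)

lemma det_jordanBlock {R : Type*} [CommRing R] (lam : R) (m : ℕ) :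
    (jordanBlock lam m).det = lam ^ m := by
  have htri : (jordanBlock lam m).IsUpperTriangular := by
    intro i j hij
    have hij : (j : ℕ) < i := hij
    rw [jordanBlock, of_apply, if_neg (by lia), if_neg (by lia)]
  rw [det_of_isUpperTriangular htri]
  simp [jordanBlock]

lemma jordanBlock_zero_mulVec_castSucc {R : Type*} [NonAssocSemiring R] {m : ℕ}
    (x : Fin (m + 1) → R) (i : Fin m) :
    (jordanBlock 0 (m + 1) *ᵥ x) i.castSucc = x i.succ := by
  rw [mulVec, dotProduct, Fintype.sum_eq_single i.succ]
  · simp [jordanBlock, Fin.castSucc_lt_succ.ne]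
  · intro j hj
    have : (i : ℕ) + 1 ≠ j := fun h => hj (Fin.ext h.symm)
    simp [jordanBlock, this]

lemma finrank_ker_mulVecLin_jordanBlock_zero_le (m : ℕ) :
    finrank F (jordanBlock (0 : F) m).mulVecLin.ker ≤ 1 := by
  cases m with
  | zero => exact (Submodule.finrank_le _).trans (by simp)
  | succ m =>
    suffices (jordanBlock (0 : F) (m + 1)).mulVecLin.ker ≤ F ∙ Pi.single 0 1 from
      (Submodule.finrank_mono this).trans_eq (finrank_span_singleton (by simp))
    intro x hx
    refine Submodule.mem_span_singleton.2 ⟨x 0, ?_⟩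
    ext i
    cases i using Fin.cases with
    | zero => simp
    | succ i =>
      have hxi : x i.succ = 0 :=
        (jordanBlock_zero_mulVec_castSucc x i).symm.trans (congrFun hx i.castSucc)
      simp [hxi]

lemma finrank_ker_mulVecLin_jordanBlock_le [DecidableEq F] (lam : F) (m : ℕ) :
    finrank F (jordanBlock lam m).mulVecLin.ker ≤ if lam = 0 then 1 else 0 := by
  split_ifs with hlam
  · subst hlam
    exact finrank_ker_mulVecLin_jordanBlock_zero_le m
  · have hdet : (jordanBlock lam m).det ≠ 0 := by
      rw [det_jordanBlock]
      exact pow_ne_zero m hlam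
    have hker : (jordanBlock lam m).mulVecLin.ker = ⊥ :=
      ker_mulVecLin_eq_bot_iff.2 fun _ => eq_zero_of_mulVec_eq_zero hdet
    rw [hker, finrank_bot]

lemma finrank_ker_mulVecLin_blockDiagonal'_jordanBlock_le [DecidableEq F] {ι : Type*} [Fintype ι]
    [DecidableEq ι] (lam : ι → F) (sz : ι → ℕ) :
    finrank F (blockDiagonal' fun i => jordanBlock (lam i) (sz i)).mulVecLin.ker ≤
      (Finset.univ.filter fun i => lam i = 0).card := by
  rw [finrank_ker_mulVecLin_blockDiagonal', Finset.card_filter]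
  exact Finset.sum_le_sum fun i _ => finrank_ker_mulVecLin_jordanBlock_le (lam i) (sz i)

end Nullity

theorem stmt_9_general {F ι : Type*} [Field F] [IsAlgClosed F] [Fintype ι] [DecidableEq ι] {k : ℕ}
    (hk : (k : F) ≠ 0) {J : Matrix ι ι F} (hJ : finrank F J.mulVecLin.ker ≤ 1)
    (C : Matrix ι ι F) : ∃ X₁ X₂ : Matrix ι ι F, C = X₁ ^ k + J * X₂ ^ k := by
  let φ : Matrix ι ι F ≃ₐ[F] End F (ι → F) := Matrix.toLinAlgEquiv'
  obtain ⟨X₁, X₂, h⟩ := exists_eq_pow_add_mul_pow hk (J := φ J) hJ (φ C)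
  exact ⟨φ.symm X₁, φ.symm X₂, φ.injective (by simpa using h)⟩

/-- If `J` is in Jordan canonical form with at most one Jordan block corresponding
to the eigenvalue `0`, then `(X₁, X₂) ↦ X₁^k + J X₂^k` is surjective. -/
theorem stmt_9 {F : Type*} [Field F] [DecidableEq F] [IsAlgClosed F] [CharZero F] {n r : ℕ}
    (k : ℕ) (hk : 2 ≤ k)
    (sz : Fin r → ℕ) (hsz : ∀ i, 0 < sz i) (lam : Fin r → F)
    (hone : (Finset.univ.filter (fun i : Fin r => lam i = 0)).card ≤ 1)
    (e : (Σ i : Fin r, Fin (sz i)) ≃ Fin n)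
    (J : Matrix (Fin n) (Fin n) F)
    (hJ : J = Matrix.reindex e e
      (Matrix.blockDiagonal' (fun i => jordanBlock (lam i) (sz i)))) :
    ∀ C : Matrix (Fin n) (Fin n) F,
      ∃ X₁ X₂ : Matrix (Fin n) (Fin n) F, C = X₁ ^ k + J * X₂ ^ k := by
  subst hJ
  exact stmt_9_general (Nat.cast_ne_zero.2 (by lia)) <| (finrank_ker_mulVecLin_reindex e _).trans_le
    ((finrank_ker_mulVecLin_blockDiagonal'_jordanBlock_le lam sz).trans hone)
end

section
/- Let F be an algebraically closed field of characteristic 0 and k ≥ 2 an integer. For A₁ ∈ GL₄(F) and A₂ ∈ M₄(F) with r₀ = nullity(A₂), the map (X₁,X₂) ↦ A₁X₁^k + A₂X₂^k is surjective on M₄(F) if and only if k(r₀ − 1) < 4. In particular, for k = 2 or k = 3 surjectivity holds iff r₀ ≤ 2, and for k ≥ 4 surjectivity holds iff r₀ ≤ 1. -/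
/-!
Inverting `A₁` and transposing turns the question into whether every endomorphism `C` has the form
`X ^ k + Y ^ k * B`. It suffices to find `X` such that `X ^ k` agrees with `C` on `B.ker` and
nowhere else: then `C - X ^ k = Z * B` with `Z` invertible, and invertible endomorphisms have
`k`-th roots.

Such an `X` exists in any dimension unless `B.ker` contains a chain `w ↦ C w ↦ 0` with `C w ≠ 0`.
When `k * (r₀ - 1) < 4` and `k ≥ 2`, a chain forces `k ≤ 3` and `B.ker = span {w, C w}`. Then either
the range of `C` is spanned by `C w` and `C` itself is a `k`-th power, or one can take for `X` a
nilpotent Jordan chain of length `k + 1` from `w` to `C w`, completed by a scalar.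

Conversely, if `C` acts on `B.ker` as a single nilpotent Jordan block, then so does `X ^ k`, so
that some vector killed by a power of `X` is not killed by `X ^ (k * (r₀ - 1))`; hence
`k * (r₀ - 1)` is less than the dimension.
-/

open Module Submodule

theorem exists_pow_sub_mem_of_isMaximal (F : Type*) {S : Type*} [Field F] [IsAlgClosed F]
    [CommRing S] [Algebra F S] [Module.Finite F S] {k : ℕ} (hk : k ≠ 0)
    (m : Ideal S) [m.IsMaximal] (a : S) : ∃ y, y ^ k - a ∈ m := by
  obtain ⟨c, hc⟩ := (IsAlgClosed.algebraMap_bijective_of_isIntegral (k := F) (K := S ⧸ m)).2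
    (Ideal.Quotient.mk m a)
  obtain ⟨z, rfl⟩ := IsAlgClosed.exists_pow_nat_eq c (Nat.pos_of_ne_zero hk)
  refine ⟨algebraMap F S z, Ideal.Quotient.eq.1 ?_⟩
  rw [← hc, ← map_pow]
  rfl

theorem exists_isNilpotent_pow_sub (F : Type*) {S : Type*} [Field F] [IsAlgClosed F]
    [CommRing S] [Algebra F S] [Module.Finite F S] {k : ℕ} (hk : k ≠ 0) (a : S) :
    ∃ y, IsNilpotent (y ^ k - a) := by
  have : IsArtinianRing S := IsArtinianRing.of_finite F S
  choose s hs using fun m : MaximalSpectrum S ↦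
    exists_pow_sub_mem_of_isMaximal F hk m.asIdeal a
  obtain ⟨y, hy⟩ := Ideal.exists_forall_sub_mem_ideal (I := MaximalSpectrum.asIdeal)
    (fun m m' hne ↦ Ideal.isCoprime_of_isMaximal (mt MaximalSpectrum.ext hne)) s
  refine ⟨y, ?_⟩
  rw [nilpotent_iff_mem_prime]
  intro p hp
  have hpm : p.IsMaximal := inferInstance
  have hyp : y ^ k - s ⟨p, hpm⟩ ^ k ∈ p :=
    Ideal.mem_of_dvd p (sub_dvd_pow_sub_pow _ _ k) (hy ⟨p, hpm⟩)
  simpa using add_mem hyp (hs ⟨p, hpm⟩)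

open Polynomial in
theorem exists_pow_eq_of_isUnit (F : Type*) {S : Type*} [Field F] [IsAlgClosed F]
    [CommRing S] [Algebra F S] [Module.Finite F S] {k : ℕ} (hk : (k : F) ≠ 0) {a : S}
    (ha : IsUnit a) : ∃ y, y ^ k = a := by
  have hk₀ : k ≠ 0 := fun h ↦ hk (by simp [h])
  obtain ⟨y, hy⟩ := exists_isNilpotent_pow_sub F hk₀ a
  have hy_unit : IsUnit y := by
    rw [← isUnit_pow_iff hk₀]
    simpa using hy.isUnit_add_left_of_commute ha (Commute.all _ _)
  have hk_unit : IsUnit (k : S) := by simpa using (IsUnit.mk0 _ hk).map (algebraMap F S)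
  obtain ⟨r, ⟨-, hr⟩, -⟩ := existsUnique_nilpotent_sub_and_aeval_eq_zero
    (P := (X ^ k - C a : S[X])) (x := y) (by simpa using hy)
    (by simpa [derivative_X_pow] using hk_unit.mul (hy_unit.pow (k - 1)))
  exact ⟨r, by simpa [sub_eq_zero] using hr⟩

theorem exists_mem_adjoin_pow_eq_of_isUnit {F A : Type*} [Field F] [IsAlgClosed F] [Ring A]
    [Algebra F A] [Module.Finite F A] {k : ℕ} (hk : (k : F) ≠ 0) {a : A} (ha : IsUnit a) :
    ∃ y ∈ Algebra.adjoin F {a}, y ^ k = a := by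
  let a' : Algebra.adjoin F {a} := ⟨a, Algebra.self_mem_adjoin_singleton F a⟩
  have ha' : a' ∈ nonZeroDivisors (Algebra.adjoin F {a}) :=
    mem_nonZeroDivisors_iff_right.2 fun z hz ↦
      Subtype.ext (ha.mul_left_eq_zero.1 (congrArg Subtype.val hz))
  obtain ⟨y, hy⟩ := exists_pow_eq_of_isUnit F hk
    (IsArtinianRing.isUnit_of_nonZeroDivisor_of_isIntegral' (R := F) ha')
  exact ⟨y, y.2, congrArg Subtype.val hy⟩

section

variable {F V : Type*} [Field F] [AddCommGroup V] [Module F V]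

-- If `M y = C y`, then the component of `y` along `P` is an eigenvector of `γ * C`, unless zero.
theorem eqLocus_eq_of_not_hasEigenvalue {M C γ : End F V} {K Q P : Submodule F V} {t : F}
    (hsup : K ⊔ Q ⊔ P = ⊤) (hK : ∀ x ∈ K, M x = C x) (hQ : ∀ x ∈ Q, M x = 0)
    (hQC : Disjoint Q C.ker) (hγQ : ∀ x ∈ Q, γ (C x) = 0) (hP : ∀ x ∈ P, γ (M x) = t • x)
    (ht : ¬ (γ * C).HasEigenvalue t) : M.eqLocus C = K := by
  refine le_antisymm (fun y hy ↦ ?_) hK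
  obtain ⟨z, hz, p, hp, rfl⟩ := mem_sup.1 (hsup.ge (mem_top (x := y)))
  obtain ⟨x, hx, q, hq, rfl⟩ := mem_sup.1 hz
  have hMp : M p = C q + C p := by
    simpa [hK x hx, hQ q hq, add_assoc] using hy
  have hp0 : p = 0 := by
    by_contra hp0
    refine ht (End.hasEigenvalue_of_hasEigenvector ⟨End.mem_eigenspace_iff.2 ?_, hp0⟩)
    rw [End.mul_apply, ← hP p hp, hMp, map_add, hγQ q hq, zero_add]
  have hq0 : q = 0 := disjoint_def.1 hQC q hq (by simpa [hp0, eq_comm] using hMp)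
  simpa [hp0, hq0] using hx

theorem disjoint_range_ker_mul {N D : End F V} (hN : Function.Injective N)
    (hD : Disjoint D.range D.ker) (hND : ∀ v ∈ D.ker, N v = v) :
    Disjoint (N * D).range (N * D).ker := by
  rw [disjoint_def]
  rintro _ ⟨w, rfl⟩ hv
  have hker : (N * D) w ∈ D.ker := hN (by simpa using hv)
  have hw : (N * D) w = D w := hN (hND _ hker)
  rw [hw] at hker ⊢
  exact disjoint_def.1 hD _ ⟨w, rfl⟩ hker

theorem exists_isProj (K : Submodule F V) : ∃ q : End F V, LinearMap.IsProj K q := by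
  obtain ⟨L, hL⟩ := K.exists_isCompl
  exact ⟨K.projection L hL, projection_apply_mem hL,
    fun x hx ↦ projection_apply_of_mem_left hL hx⟩

/-- The endomorphism that is `1 - q` on the image of the projection `p` and the scalar `t` on its
kernel. If `q` projects onto a subspace of that image and `t ≠ 0`, then the subspace is its kernel,
and is disjoint from its range. -/
def scaledComplement (p q : End F V) (t : F) : End F V :=
  (1 - q) * p + t • (1 - p)

section scaledComplement

variable {J K : Submodule F V} {p q : End F V} {t : F}

theorem proj_scaledComplement_apply (hJK : J ≤ K) (hq : LinearMap.IsProj J q)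
    (hp : LinearMap.IsProj K p) (v : V) :
    p (scaledComplement p q t v) = p v - q (p v) := by
  simp [scaledComplement, hp.map_id _ (hp.map_mem v),
    hp.map_id _ (hJK (hq.map_mem (p v)))]

theorem ker_scaledComplement_le (hJK : J ≤ K) (hq : LinearMap.IsProj J q)
    (hp : LinearMap.IsProj K p) (ht : t ≠ 0) : (scaledComplement p q t).ker ≤ J := by
  intro v hv
  have hqv : p v = q (p v) := by
    rw [← sub_eq_zero, ← proj_scaledComplement_apply hJK hq hp, LinearMap.mem_ker.1 hv, map_zero]
  have hpv : v = p v := by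
    simpa [scaledComplement, ← hqv, ht, sub_eq_zero] using hv
  rw [hpv, hqv]
  exact hq.map_mem _

theorem disjoint_range_ker_scaledComplement (hJK : J ≤ K) (hq : LinearMap.IsProj J q)
    (hp : LinearMap.IsProj K p) (ht : t ≠ 0) :
    Disjoint (scaledComplement p q t).range (scaledComplement p q t).ker := by
  rw [disjoint_def]
  rintro _ ⟨w, rfl⟩ hv
  have hJ := ker_scaledComplement_le hJK hq hp ht hv
  have hpw := proj_scaledComplement_apply (t := t) hJK hq hp w
  rw [hp.map_id _ (hJK hJ)] at hpw
  rw [← hq.map_id _ hJ, hpw, map_sub, hq.map_id _ (hq.map_mem _), sub_self]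

end scaledComplement

section FiniteDimensional

variable [FiniteDimensional F V]

theorem exists_pow_eq_of_disjoint_range_ker [IsAlgClosed F] {k : ℕ} (hk : (k : F) ≠ 0) {M : End F V}
    (hM : Disjoint M.range M.ker) : ∃ X : End F V, X ^ k = M := by
  have hcompl : IsCompl M.range M.ker :=
    (isCompl_iff_disjoint _ _ M.finrank_range_add_finrank_ker.ge).2 hM
  let p : End F V := M.range.projection M.ker hcompl
  have hpM : p * M = M := LinearMap.ext fun v ↦
    projection_apply_of_mem_left hcompl ⟨v, rfl⟩
  have hMp : M * p = M := LinearMap.ext fun v ↦ by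
    have hv := sub_projection_mem hcompl v
    rw [LinearMap.mem_ker, map_sub, sub_eq_zero] at hv
    exact hv.symm
  have hp : IsIdempotentElem p := isIdempotentElem_projection hcompl
  let N := M + (1 - p)
  have hpN : p * N = M := by simp [N, mul_add, mul_sub, hpM, hp.eq]
  have hNp : N * p = M := by simp [N, add_mul, sub_mul, hMp, hp.eq]
  have hN : IsUnit N := by
    rw [LinearMap.isUnit_iff_ker_eq_bot, LinearMap.ker_eq_bot']
    intro v hv
    have hMv : M v = 0 := by rw [← hpN, End.mul_apply, hv, map_zero]
    have hpv : p v = 0 := (projection_apply_eq_zero_iff hcompl).2 hMv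
    simpa [N, hMv, hpv] using hv
  obtain ⟨g, hg, hgk⟩ := exists_mem_adjoin_pow_eq_of_isUnit hk hN
  have hcomm : Commute p g :=
    Algebra.commute_of_mem_adjoin_singleton_of_commute hg (hpN.trans hNp.symm)
  have hk₀ : k ≠ 0 := fun h ↦ hk (by simp [h])
  exact ⟨p * g, by rw [hcomm.mul_pow, hgk, hp.pow_eq hk₀, hpN]⟩

theorem exists_linearEquiv_comp_eq {W : Type*} [AddCommGroup W] [Module F W] {f g : W →ₗ[F] V}
    (h : f.ker = g.ker) : ∃ e : V ≃ₗ[F] V, ∀ w, e (f w) = g w := by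
  obtain ⟨e, he⟩ := exists_linearEquiv_restrict_eq
    (f.quotKerEquivRange.symm ≪≫ₗ quotEquivOfEq _ _ h ≪≫ₗ g.quotKerEquivRange)
  refine ⟨e, fun w ↦ ?_⟩
  have hw : f.quotKerEquivRange.symm ⟨f w, w, rfl⟩ = f.ker.mkQ w :=
    (LinearEquiv.symm_apply_eq _).2 rfl
  rw [← he ⟨f w, w, rfl⟩]
  simp [hw]

theorem exists_eq_pow_add_pow_mul [IsAlgClosed F] {k : ℕ} (hk : (k : F) ≠ 0) {X B C : End F V}
    (h : (X ^ k).eqLocus C = B.ker) : ∃ Y : End F V, C = X ^ k + Y ^ k * B := by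
  obtain ⟨e, he⟩ := exists_linearEquiv_comp_eq (f := B) (g := C - X ^ k)
    (by rw [← h, eq_comm, LinearMap.eqLocus_eq_ker_sub, ← LinearMap.ker_neg, neg_sub])
  obtain ⟨Y, hY⟩ := exists_pow_eq_of_disjoint_range_ker hk (M := e.toLinearMap) (by simp)
  exact ⟨Y, by ext v; simp [hY, he]⟩

theorem exists_ne_zero_not_hasEigenvalue [Infinite F] (f : End F V) :
    ∃ t ≠ 0, ¬ f.HasEigenvalue t := by
  obtain ⟨t, ht⟩ := (f.finite_hasEigenvalue.insert 0).exists_notMem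
  exact ⟨t, fun h ↦ ht (.inl h), fun h ↦ ht (.inr h)⟩

theorem exists_linearEquiv_eqOn_add {C q : End F V} {K : Submodule F V}
    (h : Disjoint (K.map C) (K ⊓ C.ker)) (hq : LinearMap.IsProj (K ⊓ C.ker) q) :
    ∃ N : V ≃ₗ[F] V, ∀ x ∈ K, N x = C x + q x := by
  suffices hker : ((C + q).domRestrict K).ker = ⊥ by
    obtain ⟨N, hN⟩ := exists_linearEquiv_comp_eq (K.ker_subtype.trans hker.symm)
    exact ⟨N, fun x hx ↦ hN ⟨x, hx⟩⟩
  rw [LinearMap.ker_eq_bot']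
  rintro ⟨x, hx⟩ hCq
  have hCx : C x = -q x := eq_neg_of_add_eq_zero_left hCq
  have hCx0 : C x = 0 := disjoint_def.1 h _ ⟨x, hx, rfl⟩
    (hCx ▸ neg_mem (hq.map_mem x))
  simpa [hCx0, hq.map_id x ⟨hx, hCx0⟩] using hCx

theorem exists_eqLocus_pow_eq [IsAlgClosed F] {k : ℕ} (hk : (k : F) ≠ 0) {C : End F V}
    {K : Submodule F V} (h : Disjoint (K.map C) (K ⊓ C.ker)) :
    ∃ X : End F V, (X ^ k).eqLocus C = K := by
  obtain ⟨q, hq⟩ := exists_isProj (K ⊓ C.ker)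
  obtain ⟨p, hp⟩ := exists_isProj K
  obtain ⟨N, hN⟩ := exists_linearEquiv_eqOn_add h hq
  have : Infinite F := IsAlgClosed.instInfinite
  obtain ⟨t, ht, htC⟩ := exists_ne_zero_not_hasEigenvalue (N.symm.toLinearMap * C)
  -- On `K`, the product `N * D` is `(C + q) * (1 - q) = C`; on `p.ker` it is `t • N`.
  let D := scaledComplement p q t
  have hDK : ∀ x ∈ K, D x = x - q x := fun x hx ↦ by
    simp [D, scaledComplement, hp.map_id x hx]
  have hDU : ∀ x ∈ p.ker, D x = t • x := fun x hx ↦ by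
    simp [D, scaledComplement, LinearMap.mem_ker.1 hx]
  have hND : ∀ v ∈ D.ker, N v = v := fun v hv ↦ by
    have hv' := ker_scaledComplement_le inf_le_left hq hp ht hv
    rw [hN v hv'.1, LinearMap.mem_ker.1 hv'.2, hq.map_id v hv', zero_add]
  obtain ⟨X, hX⟩ := exists_pow_eq_of_disjoint_range_ker hk <|
    disjoint_range_ker_mul N.injective
      (disjoint_range_ker_scaledComplement inf_le_left hq hp ht) hND
  refine ⟨X, hX ▸ eqLocus_eq_of_not_hasEigenvalue
    (Q := ⊥) (P := p.ker) (γ := N.symm.toLinearMap)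
    (by simpa using hp.isCompl.sup_eq_top) (fun x hx ↦ ?_) (by simp) disjoint_bot_left (by simp)
    (fun x hx ↦ ?_) htC⟩
  · have hqx := hq.map_mem x
    change N (D x) = C x
    rw [hDK x hx, map_sub, hN x hx, hN _ hqx.1, hq.map_id _ hqx, LinearMap.mem_ker.1 hqx.2]
    simp
  · change N.symm (N (D x)) = _
    rw [N.symm_apply_apply, hDU x hx]

end FiniteDimensional

/-- The family `v` is a nilpotent Jordan chain of `T`: the endomorphism `T` maps each `v i` to
`v (i + 1)` and the last vector to `0`. -/
def IsJordanChain {m : ℕ} (T : End F V) (v : Fin m → V) : Prop :=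
  ∀ i : Fin m, T (v i) = if h : i + 1 < m then v ⟨i + 1, h⟩ else 0

theorem IsJordanChain.pow_apply {m : ℕ} {T : End F V} {v : Fin m → V} (h : IsJordanChain T v)
    (j : ℕ) (i : Fin m) : (T ^ j) (v i) = if h : i + j < m then v ⟨i + j, h⟩ else 0 := by
  induction j with
  | zero => simp
  | succ j ih =>
    rw [pow_succ', End.mul_apply, ih]
    split_ifs with hj hj' hj'
    · simp [h _, hj', add_assoc]
    · simp [h _, hj', add_assoc]
    · omega
    · exact map_zero T

theorem IsJordanChain.pow_apply_zero {m : ℕ} {T : End F V} {v : Fin (m + 1) → V}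
    (h : IsJordanChain T v) : (T ^ m) (v 0) = v (Fin.last m) := by
  simpa [Fin.last] using h.pow_apply m 0

theorem IsJordanChain.pow_apply_eq_zero {m : ℕ} {T : End F V} {v : Fin m → V}
    (h : IsJordanChain T v) {j : ℕ} {i : Fin m} (hij : m ≤ i + j) : (T ^ j) (v i) = 0 :=
  (h.pow_apply j i).trans (dif_neg hij.not_gt)

theorem exists_isJordanChain {m : ℕ} {v : Fin m → V} (hv : LinearIndependent F v)
    {P : Submodule F V} (hP : IsCompl (span F (Set.range v)) P) (s : F) :
    ∃ X : End F V, IsJordanChain X v ∧ ∀ p ∈ P, X p = s • p := by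
  let b := Basis.span hv
  refine ⟨LinearMap.ofIsCompl hP (b.constr F fun i ↦ if h : i + 1 < m then v ⟨i + 1, h⟩ else 0)
    (s • P.subtype), fun i ↦ ?_, fun p hp ↦ ?_⟩
  · have hb : v i = b i := congrArg Subtype.val (Basis.span_apply hv i).symm
    rw [hb, LinearMap.ofIsCompl_apply_left, Basis.constr_basis]
  · exact LinearMap.ofIsCompl_apply_right hP ⟨p, hp⟩

theorem pow_apply_of_apply_eq_smul {X : End F V} {s : F} {x : V} (h : X x = s • x) (n : ℕ) :
    (X ^ n) x = s ^ n • x := by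
  induction n with
  | zero => simp
  | succ n ih => rw [pow_succ', End.mul_apply, ih, map_smul, h, smul_smul, ← pow_succ]

theorem mul_lt_finrank_of_isJordanChain_pow [FiniteDimensional F V] {k r : ℕ} {X : End F V}
    {v : Fin (r + 1) → V} (h : IsJordanChain (X ^ k) v) (hv : v (Fin.last r) ≠ 0) :
    k * r < finrank F V := by
  have hlast : (X ^ (k * r)) (v 0) = v (Fin.last r) := by
    rw [pow_mul, h.pow_apply_zero]
  have hzero : (X ^ (k * (r + 1))) (v 0) = 0 := by
    rw [pow_mul, h.pow_apply_eq_zero (by simp)]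
  by_contra! hle
  have hker : (X ^ finrank F V) (v 0) = 0 := End.ker_pow_le_ker_pow_finrank X _ hzero
  rw [← Nat.sub_add_cancel hle, pow_add, End.mul_apply, hker, map_zero] at hlast
  exact hv hlast.symm

theorem mul_finrank_ker_sub_one_lt_finrank [FiniteDimensional F V] [Nontrivial V] {k : ℕ}
    {B : End F V} (h : ∀ C : End F V, ∃ X Y : End F V, C = X ^ k + Y ^ k * B) :
    k * (finrank F B.ker - 1) < finrank F V := by
  rcases hr : finrank F B.ker with _ | r
  · simpa using finrank_pos
  let v : Fin (r + 1) → V := B.ker.subtype ∘ finBasisOfFinrankEq F B.ker hr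
  have hv : LinearIndependent F v :=
    (Basis.linearIndependent _).map' _ B.ker.ker_subtype
  obtain ⟨P, hP⟩ := (span F (Set.range v)).exists_isCompl
  obtain ⟨C, hC, -⟩ := exists_isJordanChain hv hP 0
  obtain ⟨X, Y, hXY⟩ := h C
  have hX : IsJordanChain (X ^ k) v := fun i ↦ by
    have hB : B (v i) = 0 := (finBasisOfFinrankEq F B.ker hr i).2
    rw [← hC i, hXY]
    simp [hB]
  exact mul_lt_finrank_of_isJordanChain_pow hX (hv.ne_zero _)

theorem exists_isCompl_disjoint [FiniteDimensional F V] {L T : Submodule F V}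
    (h : finrank F T ≤ finrank F L) : ∃ P, IsCompl L P ∧ Disjoint T P := by
  induction hn : finrank F V - finrank F L generalizing L T with
  | zero =>
    have hL : L = ⊤ := eq_top_of_finrank_eq
      (le_antisymm L.finrank_le (Nat.sub_eq_zero_iff_le.1 hn))
    exact ⟨⊥, hL ▸ isCompl_top_bot, disjoint_bot_right⟩
  | succ n ih =>
    obtain ⟨y, hyL, hyT⟩ : ∃ y, y ∉ L ∧ y ∉ T := by
      by_contra! hLT
      rcases (AddSubgroupClass.subset_union (H := (⊤ : Submodule F V))).1
        (fun y _ ↦ or_iff_not_imp_left.2 (hLT y)) with hL | hT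
      · rw [top_le_iff.1 hL, finrank_top] at hn
        omega
      · rw [top_le_iff.1 hT, finrank_top] at h
        omega
    have hL := finrank_sup_span_singleton hyL
    have hT := finrank_sup_span_singleton hyT
    obtain ⟨P, hLP, hTP⟩ := ih (L := L ⊔ F ∙ y) (T := T ⊔ F ∙ y) (by omega) (by omega)
    exact ⟨F ∙ y ⊔ P,
      (disjoint_span_singleton_of_notMem hyL).isCompl_sup_right_of_isCompl_sup_left hLP,
      (disjoint_span_singleton_of_notMem hyT).disjoint_sup_right_of_disjoint_sup_left hTP⟩

theorem exists_linearIndependent_last_eq [FiniteDimensional F V] {u : V} (hu : u ≠ 0) {m : ℕ}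
    (hm : m < finrank F V) :
    ∃ x : Fin (m + 1) → V, LinearIndependent F x ∧ x (Fin.last m) = u := by
  induction m with
  | zero => exact ⟨![u], by simpa using hu, rfl⟩
  | succ m ih =>
    obtain ⟨x, hx, hxu⟩ := ih (by omega)
    obtain ⟨y, hy⟩ := exists_linearIndependent_cons_of_lt_finrank hx hm
    exact ⟨Fin.cons y x, hy, by rw [← hxu, ← Fin.succ_last, Fin.cons_succ]⟩

theorem linearIndependent_pair_of_apply_apply_eq_zero {C : End F V} {w : V} (hw : C w ≠ 0)
    (hw₂ : C (C w) = 0) : LinearIndependent F ![w, C w] := by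
  rw [LinearIndependent.pair_symm_iff, LinearIndependent.pair_iff' hw]
  intro a ha
  rw [← ha, map_smul, hw₂, smul_zero] at hw
  exact hw rfl

theorem finrank_span_apply_pair {C : End F V} {w : V} (hw : C w ≠ 0) (hw₂ : C (C w) = 0) :
    finrank F (span F {w, C w}) = 2 := by
  rw [← Matrix.range_cons_cons_empty,
    finrank_span_eq_card (linearIndependent_pair_of_apply_apply_eq_zero hw hw₂), Fintype.card_fin]

theorem linearIndependent_cons_snoc {w u : V} (hwu : LinearIndependent F ![w, u]) {m : ℕ}
    {x : Fin m → V} (hx : LinearIndependent F ((span F {w, u}).mkQ ∘ x)) :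
    LinearIndependent F (Fin.cons w (Fin.snoc x u) : Fin (m + 2) → V) := by
  have hdisj : Disjoint (span F (Set.range x)) (span F {w, u}) := by
    simpa using range_ker_disjoint hx
  have hu : u ∉ span F (Set.range x) := fun hu ↦
    hwu.ne_zero 1 (disjoint_def.1 hdisj u hu (mem_span_of_mem (by simp)))
  refine linearIndependent_finCons.2
    ⟨linearIndependent_finSnoc.2 ⟨hx.of_comp _, hu⟩, fun hw ↦ ?_⟩
  rw [Fin.range_snoc, mem_span_insert] at hw
  obtain ⟨a, z, hz, rfl⟩ := hw
  have hz₀ : z = 0 := disjoint_def.1 hdisj z hz <| by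
    simpa using sub_mem (mem_span_of_mem (by simp : a • u + z ∈ {a • u + z, u}))
      (smul_mem _ a (mem_span_of_mem (by simp : u ∈ {a • u + z, u})))
  have hu₀ : u ≠ 0 := by simpa using hwu.ne_zero 1
  exact (LinearIndependent.pair_iff' hu₀).1 (LinearIndependent.pair_symm_iff.1 hwu) a
    (by simp [hz₀])

theorem exists_eqLocus_pow_eq_span_pair [FiniteDimensional F V] [IsAlgClosed F] {C : End F V}
    {w : V} (hw : C w ≠ 0) (hw₂ : C (C w) = 0) {m : ℕ} {x : Fin m → V}
    (hx : LinearIndependent F ((span F {w, C w}).mkQ ∘ x)) (hCx : LinearIndependent F (C ∘ x)) :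
    ∃ X : End F V, (X ^ (m + 1)).eqLocus C = span F {w, C w} := by
  let v : Fin (m + 2) → V := Fin.cons w (Fin.snoc x (C w))
  have hv : LinearIndependent F v :=
    linearIndependent_cons_snoc (linearIndependent_pair_of_apply_apply_eq_zero hw hw₂) hx
  have hlast : v (Fin.last (m + 1)) = C w := by
    simp [v, ← Fin.succ_last]
  have hrange : span F (Set.range v) = span F {w, C w} ⊔ span F (Set.range x) := by
    rw [← span_union, Fin.range_cons, Fin.range_snoc, Set.insert_union, Set.singleton_union]
  obtain ⟨P, hvP, hTP⟩ := exists_isCompl_disjoint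
    (L := span F (Set.range v)) (T := span F (Set.range (C ∘ x)))
    (by simp [finrank_span_eq_card hv, finrank_span_eq_card hCx])
  obtain ⟨P', hTP', hPP'⟩ := hTP.exists_isCompl
  let γ := P.projection P' hPP'.symm
  obtain ⟨t, -, ht⟩ := exists_ne_zero_not_hasEigenvalue (γ * C)
  obtain ⟨s, rfl⟩ := IsAlgClosed.exists_pow_nat_eq t m.succ_pos
  obtain ⟨X, hXv, hXP⟩ := exists_isJordanChain hv hvP s
  refine ⟨X, eqLocus_eq_of_not_hasEigenvalue (Q := span F (Set.range x)) (P := P) (γ := γ)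
    (hrange ▸ hvP.sup_eq_top) ?_ ?_ ?_ ?_ ?_ ht⟩
  · intro y hy
    refine LinearMap.eqOn_span (s := {w, C w}) ?_ hy
    rintro _ (rfl | rfl)
    · exact hXv.pow_apply_zero.trans hlast
    · rw [← hlast, hXv.pow_apply_eq_zero (by simp; omega), hlast, hw₂]
  · intro y hy
    refine LinearMap.eqOn_span (g := 0) ?_ hy
    rintro _ ⟨i, rfl⟩
    have hi : v i.castSucc.succ = x i := by simp [v]
    rw [← hi, hXv.pow_apply_eq_zero (by simp; omega), LinearMap.zero_apply]
  · exact range_ker_disjoint hCx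
  · intro y hy
    refine (projection_apply_eq_zero_iff hPP'.symm).2 (hTP' ?_)
    rw [Set.range_comp, span_image]
    exact mem_map_of_mem hy
  · intro p hp
    rw [pow_apply_of_apply_eq_smul (hXP p hp), map_smul, projection_apply_of_mem_left _ hp]

theorem span_singleton_sup_ker_eq_top {C : End F V} {w : V} (hC : C.range ≤ F ∙ C w) :
    (F ∙ w) ⊔ C.ker = ⊤ := by
  refine eq_top_iff'.2 fun y ↦ ?_
  obtain ⟨a, ha⟩ := mem_span_singleton.1 (hC ⟨y, rfl⟩)
  exact mem_sup.2 ⟨a • w, smul_mem _ a (mem_span_singleton_self w), y - a • w,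
    by simp [ha], by simp⟩

theorem exists_linearIndependent_isCompl_le_ker [FiniteDimensional F V] {C : End F V} {w : V}
    (hw : C w ≠ 0) (hw₂ : C (C w) = 0) (hC : C.range ≤ F ∙ C w) {m : ℕ}
    (hm : m + 1 < finrank F V) :
    ∃ (x : Fin (m + 1) → C.ker) (P : Submodule F V),
      LinearIndependent F (Fin.cons w (C.ker.subtype ∘ x) : Fin (m + 2) → V) ∧
      x (Fin.last m) = C w ∧ P ≤ C.ker ∧
      IsCompl (span F (Set.range (Fin.cons w (C.ker.subtype ∘ x) : Fin (m + 2) → V))) P := by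
  have hker : m < finrank F C.ker := by
    have hrank := (finrank_mono hC).trans (finrank_span_singleton hw).le
    have := C.finrank_range_add_finrank_ker
    omega
  obtain ⟨x, hx, hxlast⟩ := exists_linearIndependent_last_eq (V := C.ker) (u := ⟨C w, hw₂⟩)
    (fun h ↦ hw (congrArg Subtype.val h)) hker
  have hxker : span F (Set.range (C.ker.subtype ∘ x)) ≤ C.ker := by
    rw [span_le]
    rintro _ ⟨i, rfl⟩
    exact (x i).2
  obtain ⟨P, hxP, hsup⟩ := IsModularLattice.exists_disjoint_and_sup_eq hxker
  have hwker : IsCompl (F ∙ w) C.ker := ⟨(disjoint_span_singleton_of_notMem hw).symm,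
    codisjoint_iff.2 (span_singleton_sup_ker_eq_top hC)⟩
  refine ⟨x, P, linearIndependent_finCons.2 ⟨hx.map' _ C.ker.ker_subtype,
    fun hmem ↦ hw (hxker hmem)⟩, congrArg Subtype.val hxlast, hsup.le.trans' le_sup_right, ?_⟩
  rw [Fin.range_cons, span_insert]
  exact hxP.isCompl_sup_left_of_isCompl_sup_right (hsup.symm ▸ hwker)

theorem exists_pow_eq_of_range_le_span_singleton [FiniteDimensional F V] {C : End F V} {w : V}
    (hw : C w ≠ 0) (hw₂ : C (C w) = 0) (hC : C.range ≤ F ∙ C w) {m : ℕ}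
    (hm : m + 1 < finrank F V) : ∃ X : End F V, X ^ (m + 1) = C := by
  obtain ⟨x, P, hv, hlast, hPker, hvP⟩ := exists_linearIndependent_isCompl_le_ker hw hw₂ hC hm
  obtain ⟨X, hXv, hXP⟩ := exists_isJordanChain hv hvP 0
  refine ⟨X, LinearMap.eqLocus_eq_top.1 (top_le_iff.1 ?_)⟩
  rw [← hvP.sup_eq_top, sup_le_iff, span_le]
  refine ⟨?_, fun p hp ↦ ?_⟩
  · rintro _ ⟨i, rfl⟩
    refine Fin.cases ?_ (fun i ↦ ?_) i
    · exact hXv.pow_apply_zero.trans (by simpa [← Fin.succ_last] using hlast)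
    · exact (hXv.pow_apply_eq_zero (by simp)).trans (x i).2.symm
  · rw [LinearMap.mem_eqLocus, pow_apply_of_apply_eq_smul (hXP p hp),
      LinearMap.mem_ker.1 (hPker hp)]
    simp

theorem mkQ_ne_zero_of_apply_notMem {C : End F V} {w y : V} (hw₂ : C (C w) = 0)
    (hy : C y ∉ F ∙ C w) : (span F {w, C w}).mkQ y ≠ 0 := by
  rw [mkQ_apply, Ne, Quotient.mk_eq_zero]
  intro hyK
  have hmap : (span F {w, C w}).map C = F ∙ C w := by
    rw [map_span, Set.image_pair, hw₂, Set.pair_comm, span_insert_zero]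
  exact hy (hmap ▸ mem_map_of_mem hyK)

theorem exists_linearIndependent_mkQ_and_apply [FiniteDimensional F V] {C : End F V} {w y : V}
    (hw : C w ≠ 0) (hw₂ : C (C w) = 0) (hy : C y ∉ F ∙ C w)
    (hV : 3 < finrank F V) :
    ∃ z, LinearIndependent F ![(span F {w, C w}).mkQ y, (span F {w, C w}).mkQ z] ∧
      LinearIndependent F ![C y, C z] := by
  have hquot : 1 < finrank F (V ⧸ span F {w, C w}) := by
    have := (span F {w, C w}).finrank_quotient_add_finrank
    rw [finrank_span_apply_pair hw hw₂] at this
    omega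
  obtain ⟨z', hz'⟩ := exists_linearIndependent_pair_of_one_lt_finrank hquot
    (mkQ_ne_zero_of_apply_notMem hw₂ hy)
  obtain ⟨z, rfl⟩ := mkQ_surjective _ z'
  by_cases hz : LinearIndependent F ![C y, C z]
  · exact ⟨z, hz', hz⟩
  have hCy : C y ≠ 0 := fun h ↦ hy (h ▸ zero_mem _)
  have hCwy : LinearIndependent F ![C w, C y] :=
    (LinearIndependent.pair_iff' hw).2 fun a ha ↦ hy (mem_span_singleton.2 ⟨a, ha⟩)
  rw [LinearIndependent.pair_symm_iff, LinearIndependent.pair_iff' hCy] at hCwy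
  have hwK : (span F {w, C w}).mkQ w = 0 := by
    simpa using mem_span_of_mem (by simp)
  obtain ⟨a, ha⟩ : ∃ a : F, a • C y = C z := by
    simpa [LinearIndependent.pair_iff' hCy] using hz
  refine ⟨z + w, by rwa [map_add, hwK, add_zero], (LinearIndependent.pair_iff' hCy).2 fun b hb ↦
    hCwy (b - a) ?_⟩
  rw [sub_smul, hb, ha, map_add, add_sub_cancel_left]

theorem exists_eqLocus_sq_eq_span_pair [FiniteDimensional F V] [IsAlgClosed F] {C : End F V}
    {w y : V} (hw : C w ≠ 0) (hw₂ : C (C w) = 0) (hy : C y ∉ F ∙ C w) :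
    ∃ X : End F V, (X ^ 2).eqLocus C = span F {w, C w} :=
  exists_eqLocus_pow_eq_span_pair (x := ![y]) hw hw₂
    (.of_subsingleton 0 (mkQ_ne_zero_of_apply_notMem hw₂ hy))
    (.of_subsingleton 0 fun h : C y = 0 ↦ hy (h ▸ zero_mem _))

theorem exists_eqLocus_cube_eq_span_pair [FiniteDimensional F V] [IsAlgClosed F] {C : End F V}
    {w y : V} (hw : C w ≠ 0) (hw₂ : C (C w) = 0) (hy : C y ∉ F ∙ C w)
    (hV : 3 < finrank F V) :
    ∃ X : End F V, (X ^ 3).eqLocus C = span F {w, C w} := by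
  obtain ⟨z, hz, hCz⟩ := exists_linearIndependent_mkQ_and_apply hw hw₂ hy hV
  have comp_pair {W : Type _} (f : V → W) : f ∘ ![y, z] = ![f y, f z] := by
    ext i
    fin_cases i <;> rfl
  exact exists_eqLocus_pow_eq_span_pair (x := ![y, z]) hw hw₂ (by rwa [comp_pair])
    (by rwa [comp_pair])

theorem exists_span_apply_pair_le_of_not_disjoint {C : End F V} {K : Submodule F V}
    (h : ¬Disjoint (K.map C) (K ⊓ C.ker)) :
    ∃ w, C w ≠ 0 ∧ C (C w) = 0 ∧ span F {w, C w} ≤ K := by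
  simp only [disjoint_def, mem_map, mem_inf, LinearMap.mem_ker] at h
  push Not at h
  obtain ⟨_, ⟨w, hwK, rfl⟩, ⟨hCwK, hw₂⟩, hw⟩ := h
  exact ⟨w, hw, hw₂, span_le.2 (Set.pair_subset hwK hCwK)⟩

theorem exists_pow_eq_or_eqLocus_pow_eq_span_pair [FiniteDimensional F V] [IsAlgClosed F]
    {C : End F V} {w : V} (hw : C w ≠ 0) (hw₂ : C (C w) = 0) {k : ℕ} (hk : k ≠ 0) (hk₃ : k ≤ 3)
    (hkV : k < finrank F V) :
    (∃ X : End F V, X ^ k = C) ∨ ∃ X : End F V, (X ^ k).eqLocus C = span F {w, C w} := by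
  by_cases hC : C.range ≤ F ∙ C w
  · obtain ⟨m, rfl⟩ := Nat.exists_eq_succ_of_ne_zero hk
    exact .inl (exists_pow_eq_of_range_le_span_singleton hw hw₂ hC hkV)
  obtain ⟨_, ⟨y, rfl⟩, hy⟩ := SetLike.not_le_iff_exists.1 hC
  obtain rfl | rfl | rfl : k = 1 ∨ k = 2 ∨ k = 3 := by omega
  · exact .inl ⟨C, pow_one C⟩
  · exact .inr (exists_eqLocus_sq_eq_span_pair hw hw₂ hy)
  · exact .inr (exists_eqLocus_cube_eq_span_pair hw hw₂ hy hkV)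

theorem exists_eq_pow_add_pow_mul_of_mul_lt [FiniteDimensional F V] [IsAlgClosed F]
    (hV : finrank F V ≤ 4) {k : ℕ} (hk : (k : F) ≠ 0) {B : End F V}
    (hB : k * (finrank F B.ker - 1) < finrank F V) (C : End F V) :
    ∃ X Y : End F V, C = X ^ k + Y ^ k * B := by
  have hk₀ : k ≠ 0 := fun h ↦ hk (by simp [h])
  suffices h : (∃ X : End F V, X ^ k = C) ∨ ∃ X : End F V, (X ^ k).eqLocus C = B.ker by
    rcases h with ⟨X, rfl⟩ | ⟨X, hX⟩
    · exact ⟨X, 0, by simp [hk₀]⟩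
    · exact ⟨X, exists_eq_pow_add_pow_mul hk hX⟩
  by_cases hdisj : Disjoint (B.ker.map C) (B.ker ⊓ C.ker)
  · exact .inr (exists_eqLocus_pow_eq hk hdisj)
  obtain ⟨w, hw, hw₂, hwB⟩ := exists_span_apply_pair_le_of_not_disjoint hdisj
  have hfin := finrank_span_apply_pair hw hw₂
  have hker : 2 ≤ finrank F B.ker := hfin.ge.trans (finrank_mono hwB)
  have hkV : k < finrank F V :=
    (Nat.le_mul_of_pos_right k (Nat.sub_pos_of_lt hker)).trans_lt hB
  obtain rfl | hk₁ : k = 1 ∨ 2 ≤ k := by omega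
  · exact .inl ⟨C, pow_one C⟩
  have hker' : finrank F B.ker ≤ 2 := by
    by_contra! h
    have := Nat.mul_le_mul hk₁ (Nat.le_sub_one_of_lt h)
    omega
  rw [← eq_of_le_of_finrank_le hwB (hker'.trans hfin.ge)]
  exact exists_pow_eq_or_eqLocus_pow_eq_span_pair hw hw₂ hk₀ (by omega) hkV

end

section Matrix

open Matrix

theorem forall_exists_eq_mul_pow_add_mul_pow_iff_nonsing_inv {n R : Type*} [CommRing R]
    [Fintype n] [DecidableEq n] (k : ℕ) {A₁ : Matrix n n R} (hA₁ : IsUnit A₁) (A₂ : Matrix n n R) :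
    (∀ C : Matrix n n R, ∃ X Y : Matrix n n R, C = A₁ * X ^ k + A₂ * Y ^ k) ↔
      ∀ C : Matrix n n R, ∃ X Y : Matrix n n R, C = X ^ k + A₁⁻¹ * A₂ * Y ^ k := by
  have hA₂ : A₂ = A₁ * (A₁⁻¹ * A₂) := by
    rw [mul_nonsing_inv_cancel_left _ _ ((isUnit_iff_isUnit_det _).1 hA₁)]
  rw [(IsUnit.isUnit_iff_mulLeft_bijective.1 hA₁).surjective.forall]
  refine forall_congr' fun C ↦ exists₂_congr fun X Y ↦ ?_
  nth_rw 1 [hA₂]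
  rw [mul_assoc A₁, ← mul_add, hA₁.mul_right_inj]

theorem forall_exists_eq_pow_add_mul_pow_iff {n R : Type*} [CommRing R] [Fintype n] [DecidableEq n]
    (k : ℕ) (A : Matrix n n R) :
    (∀ C : Matrix n n R, ∃ X Y : Matrix n n R, C = X ^ k + A * Y ^ k) ↔
      ∀ C : End R (n → R), ∃ X Y : End R (n → R), C = X ^ k + Y ^ k * toLinAlgEquiv' Aᵀ := by
  let τ : Matrix n n R ≃ End R (n → R) :=
    (transposeAddEquiv n n R).toEquiv.trans toLinAlgEquiv'.toEquiv
  refine τ.forall_congr fun C ↦ τ.exists_congr fun X ↦ τ.exists_congr fun Y ↦ ?_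
  rw [← τ.injective.eq_iff]
  simp [τ, transpose_pow]

theorem finrank_ker_toLinAlgEquiv'_transpose {n F : Type*} [Field F] [Fintype n] [DecidableEq n]
    (A : Matrix n n F) :
    finrank F (toLinAlgEquiv' Aᵀ).ker = finrank F A.mulVecLin.ker := by
  have hrank : finrank F Aᵀ.mulVecLin.range = finrank F A.mulVecLin.range := A.rank_transpose
  have := Aᵀ.mulVecLin.finrank_range_add_finrank_ker
  have := A.mulVecLin.finrank_range_add_finrank_ker
  change finrank F Aᵀ.mulVecLin.ker = _
  omega

theorem ker_mulVecLin_nonsing_inv_mul {n F : Type*} [Field F] [Fintype n] [DecidableEq n]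
    {A₁ : Matrix n n F} (hA₁ : IsUnit A₁) (A₂ : Matrix n n F) :
    (A₁⁻¹ * A₂).mulVecLin.ker = A₂.mulVecLin.ker := by
  rw [mulVecLin_mul, LinearMap.ker_comp_of_ker_eq_bot]
  exact LinearMap.ker_eq_bot.2 (mulVec_injective_iff_isUnit.2 (isUnit_nonsing_inv_iff.2 hA₁))

theorem forall_exists_eq_mul_pow_add_mul_pow_iff {n F : Type*} [Fintype n] [DecidableEq n]
    [Nonempty n] [Field F] [IsAlgClosed F] (hn : Fintype.card n ≤ 4) {k : ℕ} (hk : (k : F) ≠ 0)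
    {A₁ : Matrix n n F} (hA₁ : IsUnit A₁) (A₂ : Matrix n n F) :
    (∀ C : Matrix n n F, ∃ X Y : Matrix n n F, C = A₁ * X ^ k + A₂ * Y ^ k) ↔
      k * (finrank F A₂.mulVecLin.ker - 1) < Fintype.card n := by
  rw [forall_exists_eq_mul_pow_add_mul_pow_iff_nonsing_inv k hA₁,
    forall_exists_eq_pow_add_mul_pow_iff, ← ker_mulVecLin_nonsing_inv_mul hA₁,
    ← finrank_ker_toLinAlgEquiv'_transpose, ← finrank_fintype_fun_eq_card F]
  exact ⟨mul_finrank_ker_sub_one_lt_finrank,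
    exists_eq_pow_add_pow_mul_of_mul_lt (by rwa [finrank_fintype_fun_eq_card]) hk⟩

end Matrix

theorem stmt_18_general {F : Type*} [Field F] [IsAlgClosed F]
    (k : ℕ) (hk : (k : F) ≠ 0)
    (A₁ A₂ : Matrix (Fin 4) (Fin 4) F) (hA₁ : IsUnit A₁)
    (r₀ : ℕ) (hr₀ : r₀ = Module.finrank F (LinearMap.ker A₂.mulVecLin)) :
    ((∀ C : Matrix (Fin 4) (Fin 4) F,
      ∃ X₁ X₂ : Matrix (Fin 4) (Fin 4) F, C = A₁ * X₁ ^ k + A₂ * X₂ ^ k) ↔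
      k * (r₀ - 1) < 4) ∧
    ((k = 2 ∨ k = 3) →
      ((∀ C : Matrix (Fin 4) (Fin 4) F,
        ∃ X₁ X₂ : Matrix (Fin 4) (Fin 4) F, C = A₁ * X₁ ^ k + A₂ * X₂ ^ k) ↔
        r₀ ≤ 2)) ∧
    (4 ≤ k →
      ((∀ C : Matrix (Fin 4) (Fin 4) F,
        ∃ X₁ X₂ : Matrix (Fin 4) (Fin 4) F, C = A₁ * X₁ ^ k + A₂ * X₂ ^ k) ↔
        r₀ ≤ 1)) := by
  have h := forall_exists_eq_mul_pow_add_mul_pow_iff (Fintype.card_fin 4).le hk hA₁ A₂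
  rw [← hr₀, Fintype.card_fin] at h
  refine ⟨h, fun hk' ↦ h.trans ?_, fun hk' ↦ h.trans ⟨fun hlt ↦ ?_, fun hle ↦ ?_⟩⟩
  · rcases hk' with rfl | rfl <;> omega
  · by_contra! hr
    have := Nat.mul_le_mul hk' (Nat.le_sub_one_of_lt hr)
    omega
  · simp [Nat.sub_eq_zero_of_le hle]

/-- For `A₁ ∈ GL₄(F)`, `A₂ ∈ M₄(F)` with `r₀ = nullity(A₂)`, the map
`(X₁,X₂) ↦ A₁ X₁^k + A₂ X₂^k` is surjective on `M₄(F)` iff `k (r₀ - 1) < 4`.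
In particular, for `k = 2, 3` surjectivity holds iff `r₀ ≤ 2`, and for `k ≥ 4`
iff `r₀ ≤ 1`. -/
theorem stmt_18 {F : Type*} [Field F] [IsAlgClosed F] [CharZero F]
    (k : ℕ) (hk : 2 ≤ k)
    (A₁ A₂ : Matrix (Fin 4) (Fin 4) F) (hA₁ : IsUnit A₁)
    (r₀ : ℕ) (hr₀ : r₀ = Module.finrank F (LinearMap.ker A₂.mulVecLin)) :
    ((∀ C : Matrix (Fin 4) (Fin 4) F,
      ∃ X₁ X₂ : Matrix (Fin 4) (Fin 4) F, C = A₁ * X₁ ^ k + A₂ * X₂ ^ k) ↔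
      k * (r₀ - 1) < 4) ∧
    ((k = 2 ∨ k = 3) →
      ((∀ C : Matrix (Fin 4) (Fin 4) F,
        ∃ X₁ X₂ : Matrix (Fin 4) (Fin 4) F, C = A₁ * X₁ ^ k + A₂ * X₂ ^ k) ↔
        r₀ ≤ 2)) ∧
    (4 ≤ k →
      ((∀ C : Matrix (Fin 4) (Fin 4) F,
        ∃ X₁ X₂ : Matrix (Fin 4) (Fin 4) F, C = A₁ * X₁ ^ k + A₂ * X₂ ^ k) ↔
        r₀ ≤ 1)) :=
  stmt_18_general k (Nat.cast_ne_zero.2 (Nat.ne_zero_of_lt hk)) A₁ A₂ hA₁ r₀ hr₀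
end
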